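/- arXiv:2108.01032 — 6 statements merged into one kernel-verified Lean document; each statement's English description precedes it below -/
import Mathlib

section
/- Let n be a positive integer and let a, b, c, d be integers that are pairwise distinct modulo n. Then d_n(a,b) + d_n(b,c) + d_n(c,d) equals d_n(a,d) if a, b, c, d are in counterclockwise order a b c d; equals d_n(a,d) + 2n if a, d, c, b are in counterclockwise order a d c b; and equals d_n(a,d) + n in all other cases. -/
/-! Reversing an arc complements its length: `dn n u v + dn n v u = n` for distinct residues
(`dn_add_dn_swap`). Since `dn n u v ≡ v - u` modulo `n`, the three-step sum is `dn n a d + k * n`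
for some integer `k`. All four distances lie strictly between `0` and `n`, so `k ∈ {0, 1, 2}`.
After complementing arcs, the order `a b c d` says exactly that `k = 0`, and the order `a d c b`
says exactly that `k = 2`. -/

/-- Clockwise distance on a circle with `n` positions: `(v - u) mod n`. -/
def dn (n u v : ℤ) : ℤ := (v - u) % n

/-- `C(m,2) = m(m-1)/2`. -/
def c2 (m : ℤ) : ℤ := m * (m - 1) / 2

/-- `f_n(u,v) = C(d_n(u,v),2) + C(n - d_n(u,v),2)`. -/
def fn (n u v : ℤ) : ℤ := c2 (dn n u v) + c2 (n - dn n u v)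

/-- Residues `p1 p2 p3 p4` (pairwise distinct mod `n`) are in counterclockwise
order `p1 p2 p3 p4` iff the four consecutive distances sum to `n`. -/
def ccw4 (n p1 p2 p3 p4 : ℤ) : Prop :=
  dn n p1 p2 + dn n p2 p3 + dn n p3 p4 + dn n p4 p1 = n

theorem dn_pos {n u v : ℤ} (hn : 0 < n) (h : u % n ≠ v % n) : 0 < dn n u v := by
  refine lt_of_le_of_ne (Int.emod_nonneg _ hn.ne') fun h0 => h ?_
  exact (Int.emod_eq_emod_iff_emod_sub_eq_zero.mpr h0.symm).symm

theorem dn_lt {n : ℤ} (hn : 0 < n) (u v : ℤ) : dn n u v < n :=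
  Int.emod_lt_of_pos _ hn

/-- The two arcs joining a pair of distinct residues cover the circle exactly once. -/
theorem dn_add_dn_swap {n u v : ℤ} (hn : 0 < n) (h : u % n ≠ v % n) :
    dn n u v + dn n v u = n := by
  have h1 := dn_pos hn h
  have h2 := dn_lt hn u v
  have hvu : dn n v u = n - dn n u v := by
    have hmod : (v - u) % n + n * ((v - u) / n) = v - u := Int.emod_add_mul_ediv _ _
    unfold dn at *
    have e : u - v = (n - (v - u) % n) + n * (-((v - u) / n) - 1) := by linarith
    rw [e, Int.add_mul_emod_self_left]
    exact Int.emod_eq_of_lt (by linarith) (by linarith)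
  linarith

/-- Going from `a` to `d` through `b` and `c` exceeds the direct arc by whole turns. -/
theorem exists_dn_add_dn_add_dn (n a b c d : ℤ) :
    ∃ k : ℤ, dn n a b + dn n b c + dn n c d = dn n a d + n * k := by
  refine ⟨(d - a) / n - (b - a) / n - (c - b) / n - (d - c) / n, ?_⟩
  unfold dn
  linarith [Int.emod_add_mul_ediv (b - a) n, Int.emod_add_mul_ediv (c - b) n,
    Int.emod_add_mul_ediv (d - c) n, Int.emod_add_mul_ediv (d - a) n]

theorem stmt_3 (n : ℤ) (hn : 0 < n) (a b c d : ℤ)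
    (hab : a % n ≠ b % n) (hac : a % n ≠ c % n) (had : a % n ≠ d % n)
    (hbc : b % n ≠ c % n) (hbd : b % n ≠ d % n) (hcd : c % n ≠ d % n) :
    (ccw4 n a b c d → dn n a b + dn n b c + dn n c d = dn n a d) ∧
    (ccw4 n a d c b → dn n a b + dn n b c + dn n c d = dn n a d + 2 * n) ∧
    (¬ ccw4 n a b c d → ¬ ccw4 n a d c b →
      dn n a b + dn n b c + dn n c d = dn n a d + n) := by
  have sab := dn_add_dn_swap hn hab
  have sbc := dn_add_dn_swap hn hbc
  have scd := dn_add_dn_swap hn hcd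
  have sad := dn_add_dn_swap hn had
  unfold ccw4
  refine ⟨fun h => by linarith, fun h => by linarith, fun h0 h2 => ?_⟩
  obtain ⟨k, hk⟩ := exists_dn_add_dn_add_dn n a b c d
  have k_gt : -1 < k := by
    nlinarith [dn_pos hn hab, dn_pos hn hbc, dn_pos hn hcd, dn_lt hn a d]
  have k_lt : k < 3 := by
    nlinarith [dn_lt hn a b, dn_lt hn b c, dn_lt hn c d, dn_pos hn had]
  interval_cases k
  · exact absurd (by linarith) h0
  · linarith
  · exact absurd (by linarith) h2
end

section
/- For every positive integer n and all integers u and v, 2·d_n(v,u) + f_n(u,v) ≥ ⌊n/2⌋·⌊(n−1)/2⌋ + n − 1. -/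
theorem two_mul_c2 (m : ℤ) : 2 * c2 m = m * (m - 1) :=
  Int.mul_ediv_cancel' (Int.even_mul_pred_self m).two_dvd

/-- `f_n` is unchanged when the clockwise distance is measured in the opposite direction. -/
theorem fn_eq_reverse (n : ℤ) (hn : 0 < n) (u v : ℤ) :
    fn n u v = c2 (dn n v u) + c2 (n - dn n v u) := by
  have hneg : dn n u v = (-(u - v)) % n := by rw [dn, neg_sub]
  by_cases h : n ∣ u - v
  · have h1 : dn n u v = 0 := by rw [hneg]; exact Int.emod_eq_zero_of_dvd (h.neg_right)
    have h2 : dn n v u = 0 := Int.emod_eq_zero_of_dvd h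
    rw [fn, h1, h2]
  · have h1 : dn n u v = n - dn n v u := by
      rw [hneg, Int.neg_emod, if_neg h, Int.natAbs_of_nonneg hn.le, dn]
    rw [fn, h1, sub_sub_cancel, add_comm]

theorem stmt_5 (n : ℤ) (hn : 0 < n) (u v : ℤ) :
    2 * dn n v u + fn n u v ≥ (n / 2) * ((n - 1) / 2) + n - 1 := by
  rw [fn_eq_reverse n hn]
  generalize dn n v u = a
  have h1 := two_mul_c2 a
  have h2 := two_mul_c2 (n - a)
  obtain ⟨k, rfl | rfl⟩ := Int.even_or_odd' n
  · have e1 : 2 * k / 2 = k := by omega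
    have e2 : (2 * k - 1) / 2 = k - 1 := by omega
    rw [e1, e2]
    nlinarith [sq_nonneg (a - (k - 1))]
  · have e1 : (2 * k + 1) / 2 = k := by omega
    have e2 : (2 * k + 1 - 1) / 2 = k := by omega
    rw [e1, e2]
    have h3 : 0 ≤ (a - k) * (a - k + 1) := by
      rcases le_or_gt k a with h | h
      · exact mul_nonneg (by omega) (by omega)
      · exact mul_nonneg_of_nonpos_of_nonpos (by omega) (by omega)
    nlinarith
end

section
/- Let n be a positive integer and let x, y, x′, y′ be integers that are pairwise distinct modulo n. If x′, y′, y, x are NOT in counterclockwise order x′ y′ y x, then 2·d_n(y,x) + 2·d_n(x′,y′) + f_n(x,x′) ≥ ⌊n/2⌋·⌊(n−1)/2⌋ + n − 1 − 2·d_n(y′,y) + 2n. -/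
theorem c2_add_c2_ge (n d : ℤ) :
    c2 d + c2 (n - d) - 2 * d + n + 1 ≥ (n / 2) * ((n - 1) / 2) := by
  have h1 := two_mul_c2 d
  have h2 := two_mul_c2 (n - d)
  obtain ⟨k, rfl | rfl⟩ := Int.even_or_odd' n
  · have e1 : 2 * k / 2 = k := by omega
    have e2 : (2 * k - 1) / 2 = k - 1 := by omega
    rw [e1, e2]
    nlinarith [sq_nonneg (d - k - 1)]
  · have e1 : (2 * k + 1) / 2 = k := by omega
    have e2 : (2 * k + 1 - 1) / 2 = k := by omega
    rw [e1, e2]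
    -- a product of two consecutive integers is nonnegative
    have h3 : 0 ≤ (d - k - 1) * (d - k - 2) := by
      rcases le_or_gt (d - k - 1) 0 with h | h
      · exact mul_nonneg_of_nonpos_of_nonpos h (by omega)
      · exact mul_nonneg h.le (by omega)
    nlinarith

theorem two_mul_le_of_not_ccw4 (n : ℤ) (hn : 0 < n) (x y x' y' : ℤ) (hxy : x % n ≠ y % n)
    (hccw : ¬ ccw4 n x' y' y x) :
    2 * n ≤ dn n x' y' + dn n y' y + dn n y x + dn n x x' := by
  unfold ccw4 at hccw
  have pos (u v : ℤ) : 0 ≤ dn n u v := Int.emod_nonneg _ hn.ne'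
  have hyx : dn n y x ≠ 0 := fun h =>
    hxy (Int.emod_eq_emod_iff_emod_sub_eq_zero.mpr h)
  have hs : 0 < dn n x' y' + dn n y' y + dn n y x + dn n x x' := by
    have := pos x' y'; have := pos y' y; have := pos y x; have := pos x x'
    omega
  have hdvd : n ∣ dn n x' y' + dn n y' y + dn n y x + dn n x x' := by
    have h (u v : ℤ) : dn n u v = (v - u) - n * ((v - u) / n) := Int.emod_def _ _
    rw [h, h, h, h]
    exact ⟨-((y' - x') / n + (y - y') / n + (x - y) / n + (x' - x) / n), by ring⟩
  obtain ⟨k, hk⟩ := hdvd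
  rw [hk] at hs hccw ⊢
  have hk0 : 0 < k := pos_of_mul_pos_right hs hn.le
  have hk1 : k ≠ 1 := fun h => hccw (by rw [h, mul_one])
  have hk2 : 2 ≤ k := by omega
  nlinarith

theorem stmt_7 (n : ℤ) (hn : 0 < n) (x y x' y' : ℤ)
    (hxy : x % n ≠ y % n) (hxx' : x % n ≠ x' % n) (hxy' : x % n ≠ y' % n)
    (hyx' : y % n ≠ x' % n) (hyy' : y % n ≠ y' % n) (hx'y' : x' % n ≠ y' % n)
    (hccw : ¬ ccw4 n x' y' y x) :
    2 * dn n y x + 2 * dn n x' y' + fn n x x' ≥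
      (n / 2) * ((n - 1) / 2) + n - 1 - 2 * dn n y' y + 2 * n := by
  have h1 := two_mul_le_of_not_ccw4 n hn x y x' y' hxy hccw
  have h2 := c2_add_c2_ge n (dn n x x')
  unfold fn
  linarith
end

section
/- Let n be a positive integer and let x, y, x′, y′ be integers that are pairwise distinct modulo n. Suppose x′, y′, y, x are in counterclockwise order x′ y′ y x and Z := d_n(y′,y) satisfies 2Z ≥ n. Then 2·d_n(y,x) + 2·d_n(x′,y′) + f_n(x,x′) ≥ ⌊n/2⌋·⌊(n−1)/2⌋ + n − 1 − 2Z + ⌊(2Z − n + 2)²/4⌋. -/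
theorem stmt_8 (n : ℤ) (hn : 0 < n) (x y x' y' : ℤ)
    (hxy : x % n ≠ y % n) (hxx' : x % n ≠ x' % n) (hxy' : x % n ≠ y' % n)
    (hyx' : y % n ≠ x' % n) (hyy' : y % n ≠ y' % n) (hx'y' : x' % n ≠ y' % n)
    (hccw : ccw4 n x' y' y x) (hZ : n ≤ 2 * dn n y' y) :
    2 * dn n y x + 2 * dn n x' y' + fn n x x' ≥
      (n / 2) * ((n - 1) / 2) + n - 1 - 2 * dn n y' y +
        (2 * dn n y' y - n + 2) ^ 2 / 4 := by
  have ha : 0 ≤ dn n x' y' := Int.emod_nonneg _ hn.ne'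
  have hb : 0 ≤ dn n y x := Int.emod_nonneg _ hn.ne'
  unfold ccw4 at hccw
  unfold fn
  generalize dn n x' y' = a at *
  generalize dn n y x = b at *
  generalize dn n y' y = Z at *
  generalize dn n x x' = d at *
  have h1 := two_mul_c2 d
  have h2 := two_mul_c2 (n - d)
  obtain ⟨k, rfl | rfl⟩ := Int.even_or_odd' n
  · have e1 : 2 * k / 2 = k := by omega
    have e2 : (2 * k - 1) / 2 = k - 1 := by omega
    have e3 : (2 * Z - 2 * k + 2) ^ 2 / 4 = (Z - k + 1) ^ 2 := by
      rw [show (2 * Z - 2 * k + 2) ^ 2 = 4 * (Z - k + 1) ^ 2 by ring]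
      omega
    rw [e1, e2, e3]
    have key : (Z - k + 1) ^ 2 ≤ (k + 1 - d) ^ 2 :=
      pow_le_pow_left₀ (by omega) (by omega) 2
    linarith
  · have e1 : (2 * k + 1) / 2 = k := by omega
    have e2 : (2 * k + 1 - 1) / 2 = k := by omega
    have e3 : (2 * Z - (2 * k + 1) + 2) ^ 2 / 4 = (Z - k) * (Z - k + 1) := by
      rw [show (2 * Z - (2 * k + 1) + 2) ^ 2 = 4 * ((Z - k) * (Z - k + 1)) + 1 by ring]
      omega
    rw [e1, e2, e3]
    have key : (Z - k) * (Z - k + 1) ≤ (k + 1 - d) * (k + 2 - d) :=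
      mul_le_mul (by omega) (by omega) (by omega) (by omega)
    linarith
end

section
/- Let n ≥ 3 be an integer and let y1, y2, y3, y4 be integers (regarded as residues mod n). Set z1 := min(d_n(y1,y2), d_n(y2,y1)), z3 := min(d_n(y3,y4), d_n(y4,y3)), and S := f_n(y1,y3) + f_n(y1,y4) + f_n(y2,y3) + f_n(y2,y4) − 4·⌊n/2⌋·⌊(n−1)/2⌋. If both y1 ∈ [y3,y4] and y2 ∈ [y3,y4], or both y1 ∈ [y4,y3] and y2 ∈ [y4,y3], then S ≥ z1² + z3² − Δ_n·Δ_{z1+z3}. -/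
/-- `Δ_k = 1` if `k` is odd, `0` otherwise. -/
def delta (k : ℤ) : ℤ := if Odd k then 1 else 0

/-- `y ∈ [a,b]` on the circle: `d_n(a,y) ≤ d_n(a,b)`. -/
def memCC (n a b y : ℤ) : Prop := dn n a y ≤ dn n a b

/-- `y ∈ (a,b)` on the circle: `0 < d_n(a,y) < d_n(a,b)`. -/
def memOO (n a b y : ℤ) : Prop := 0 < dn n a y ∧ dn n a y < dn n a b

theorem two_mul_fn (n u v : ℤ) :
    2 * fn n u v = 2 * dn n u v ^ 2 - 2 * n * dn n u v + (n ^ 2 - n) := by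
  unfold fn
  linear_combination two_mul_c2 (dn n u v) + two_mul_c2 (n - dn n u v)

theorem dn_eq {n u v d k : ℤ} (h0 : 0 ≤ d) (h1 : d < n) (h : v - u = d + n * k) :
    dn n u v = d := by
  rw [dn, h, Int.add_mul_emod_self_left, Int.emod_eq_of_lt h0 h1]

theorem exists_dn (n u v : ℤ) : ∃ k, v - u = dn n u v + n * k :=
  ⟨(v - u) / n, (Int.emod_add_mul_ediv _ _).symm⟩

theorem dn_nonneg {n : ℤ} (hn : 0 < n) (u v : ℤ) : 0 ≤ dn n u v :=
  Int.emod_nonneg _ hn.ne'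

/-- Reversing an arc gives its complement, except that a trivial arc stays trivial. -/
theorem dn_swap {n : ℤ} (hn : 0 < n) (u v : ℤ) :
    (dn n u v = 0 ∧ dn n v u = 0) ∨ dn n v u = n - dn n u v := by
  obtain ⟨k, hk⟩ := exists_dn n u v
  have h0 := dn_nonneg hn u v
  have h1 := dn_lt hn u v
  rcases h0.eq_or_lt with h | h
  · left
    exact ⟨h.symm, dn_eq (k := -k) le_rfl hn (by linear_combination -hk + h)⟩
  · right
    exact dn_eq (k := -k - 1) (by omega) (by omega) (by linear_combination -hk)

theorem fn_comm {n : ℤ} (hn : 0 < n) (u v : ℤ) : fn n u v = fn n v u := by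
  have h1 := two_mul_fn n u v
  have h2 := two_mul_fn n v u
  have : 2 * fn n u v = 2 * fn n v u := by
    rcases dn_swap hn u v with ⟨h, h'⟩ | h
    · rw [h1, h2, h, h']
    · rw [h1, h2, h]; ring
  omega

theorem four_mul_floor (n : ℤ) :
    4 * ((n / 2) * ((n - 1) / 2)) = n ^ 2 - 2 * n + delta n := by
  unfold delta
  rcases Int.even_or_odd' n with ⟨m, rfl | rfl⟩
  · rw [if_neg (by simp), show 2 * m / 2 = m by omega, show (2 * m - 1) / 2 = m - 1 by omega]
    ring
  · rw [if_pos (by simp), show (2 * m + 1) / 2 = m by omega,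
      show (2 * m + 1 - 1) / 2 = m by omega]
    ring

/-- The arithmetic core: `z ≤ p` and `w ≤ q` bound the sum of squares. When `n` is odd and
`z + w` even, the congruence of `p + q + r` and `n` mod 2 makes the bound strict. -/
theorem sum_sq_bound {n p q r z w : ℤ} (hz : 0 ≤ z) (hzp : z ≤ p) (hw : 0 ≤ w) (hwq : w ≤ q)
    (hpar : Even (p + q + r + n)) :
    p ^ 2 + q ^ 2 + r ^ 2 - delta n ≥ z ^ 2 + w ^ 2 - delta n * delta (z + w) := by
  have h1 : z ^ 2 ≤ p ^ 2 := by gcongr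
  have h2 : w ^ 2 ≤ q ^ 2 := by gcongr
  have h3 := sq_nonneg r
  unfold delta
  split_ifs with hn hs
  · linarith
  · -- Equality in all three estimates would make `z + w + n` even,
    -- although `n` is odd and `z + w` is even.
    by_contra! hlt
    have e1 : r ^ 2 = 0 := by linarith
    have e2 : z ^ 2 = p ^ 2 := by linarith
    have e3 : w ^ 2 = q ^ 2 := by linarith
    have hr : r = 0 := by simpa using e1
    have hzp' : z = p := (sq_eq_sq₀ hz (hz.trans hzp)).1 e2
    have hwq' : w = q := (sq_eq_sq₀ hw (hw.trans hwq)).1 e3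
    subst hr hzp' hwq'
    rw [add_zero, Int.even_add] at hpar
    exact (Int.not_even_iff_odd.2 hn) (hpar.1 (Int.not_odd_iff_even.1 hs))
  · linarith
  · linarith

/-- The inequality when the points occur in the clockwise order `y3, y1, y2, y4`. -/
theorem bound_of_ordered {n : ℤ} (hn : 0 < n) {y1 y2 y3 y4 : ℤ}
    (hab : dn n y3 y1 ≤ dn n y3 y2) (hbL : dn n y3 y2 ≤ dn n y3 y4) :
    fn n y1 y3 + fn n y1 y4 + fn n y2 y3 + fn n y2 y4 -
        4 * ((n / 2) * ((n - 1) / 2)) ≥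
      (min (dn n y1 y2) (dn n y2 y1)) ^ 2 +
        (min (dn n y3 y4) (dn n y4 y3)) ^ 2 -
        delta n * delta (min (dn n y1 y2) (dn n y2 y1) +
          min (dn n y3 y4) (dn n y4 y3)) := by
  obtain ⟨k1, hk1⟩ := exists_dn n y3 y1
  obtain ⟨k2, hk2⟩ := exists_dn n y3 y2
  obtain ⟨k4, hk4⟩ := exists_dn n y3 y4
  have ha := dn_nonneg hn y3 y1
  have hL := dn_lt hn y3 y4
  have h12 : dn n y1 y2 = dn n y3 y2 - dn n y3 y1 :=
    dn_eq (k := k2 - k1) (by omega) (by omega) (by linear_combination hk2 - hk1)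
  have h14 : dn n y1 y4 = dn n y3 y4 - dn n y3 y1 :=
    dn_eq (k := k4 - k1) (by omega) (by omega) (by linear_combination hk4 - hk1)
  have h24 : dn n y2 y4 = dn n y3 y4 - dn n y3 y2 :=
    dn_eq (k := k4 - k2) (by omega) (by omega) (by linear_combination hk4 - hk2)
  have hz1 : 0 ≤ min (dn n y1 y2) (dn n y2 y1) := le_min (dn_nonneg hn _ _) (dn_nonneg hn _ _)
  have hz1' : min (dn n y1 y2) (dn n y2 y1) ≤ dn n y3 y2 - dn n y3 y1 :=
    (min_le_left _ _).trans h12.le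
  have hz3 : 0 ≤ min (dn n y3 y4) (dn n y4 y3) := le_min (dn_nonneg hn _ _) (dn_nonneg hn _ _)
  have hz3' : min (dn n y3 y4) (dn n y4 y3) ≤ n - dn n y3 y4 := by
    refine (min_le_right _ _).trans ?_
    rcases dn_swap hn y3 y4 with ⟨h, h'⟩ | h <;> omega
  have key := sum_sq_bound (n := n) (r := dn n y3 y4 - dn n y3 y1 - dn n y3 y2)
    hz1 hz1' hz3 hz3' ⟨n - dn n y3 y1, by ring⟩
  have f13 := two_mul_fn n y3 y1
  have f23 := two_mul_fn n y3 y2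
  have f14 := two_mul_fn n y1 y4
  have f24 := two_mul_fn n y2 y4
  rw [h14] at f14
  rw [h24] at f24
  rw [fn_comm hn y1 y3, fn_comm hn y2 y3, four_mul_floor]
  linarith

/-- The inequality when `y1` and `y2` lie on the arc from `y3` to `y4`, in either order. -/
theorem bound_of_mem {n : ℤ} (hn : 0 < n) {y1 y2 y3 y4 : ℤ}
    (h1 : memCC n y3 y4 y1) (h2 : memCC n y3 y4 y2) :
    fn n y1 y3 + fn n y1 y4 + fn n y2 y3 + fn n y2 y4 -
        4 * ((n / 2) * ((n - 1) / 2)) ≥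
      (min (dn n y1 y2) (dn n y2 y1)) ^ 2 +
        (min (dn n y3 y4) (dn n y4 y3)) ^ 2 -
        delta n * delta (min (dn n y1 y2) (dn n y2 y1) +
          min (dn n y3 y4) (dn n y4 y3)) := by
  rcases le_total (dn n y3 y1) (dn n y3 y2) with h | h
  · exact bound_of_ordered hn h h2
  · have := bound_of_ordered hn h h1
    rw [min_comm (dn n y2 y1)] at this
    linarith

theorem stmt_11 (n : ℤ) (hn : 3 ≤ n) (y1 y2 y3 y4 : ℤ)
    (hmem : (memCC n y3 y4 y1 ∧ memCC n y3 y4 y2) ∨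
            (memCC n y4 y3 y1 ∧ memCC n y4 y3 y2)) :
    fn n y1 y3 + fn n y1 y4 + fn n y2 y3 + fn n y2 y4 -
        4 * ((n / 2) * ((n - 1) / 2)) ≥
      (min (dn n y1 y2) (dn n y2 y1)) ^ 2 +
        (min (dn n y3 y4) (dn n y4 y3)) ^ 2 -
        delta n * delta (min (dn n y1 y2) (dn n y2 y1) +
          min (dn n y3 y4) (dn n y4 y3)) := by
  have hn0 : 0 < n := by omega
  rcases hmem with ⟨h1, h2⟩ | ⟨h1, h2⟩
  · exact bound_of_mem hn0 h1 h2
  · have := bound_of_mem hn0 h1 h2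
    rw [min_comm (dn n y4 y3)] at this
    linarith
end

section
/- Let n ≥ 4 be an integer, let Z1 be an integer with 0 ≤ Z1 and 2Z1 ≤ n − 1, and let Z3 be an integer with n ≤ 2Z3 and Z3 ≤ n − 1. Then (Z1 − 2)² + (Z3 − 2)² + n(n − Z1 − Z3) + 2·⌊(2Z3 − n + 2)²/4⌋ ≥ 4 + Δ_n. -/
theorem stmt_17 (n Z1 Z3 : ℤ) (hn : 4 ≤ n) (h1 : 0 ≤ Z1) (h1' : 2 * Z1 ≤ n - 1)
    (h3 : n ≤ 2 * Z3) (h3' : Z3 ≤ n - 1) :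
    (Z1 - 2) ^ 2 + (Z3 - 2) ^ 2 + n * (n - Z1 - Z3) +
        2 * ((2 * Z3 - n + 2) ^ 2 / 4) ≥ 4 + delta n := by
  rcases Int.even_or_odd' n with ⟨m, rfl | rfl⟩
  · -- Here `d = 2 * a` and `e = 2 * b`.
    obtain ⟨a, rfl⟩ : ∃ a, Z3 = m + a := ⟨Z3 - m, by ring⟩
    obtain ⟨b, rfl⟩ : ∃ b, Z1 = m - b := ⟨m - Z1, by ring⟩
    have hfloor : (2 * (m + a) - 2 * m + 2) ^ 2 / 4 = (a + 1) ^ 2 := by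
      rw [show (2 * (m + a) - 2 * m + 2) ^ 2 = 4 * (a + 1) ^ 2 by ring]
      omega
    have hdelta : delta (2 * m) = 0 := by simp [delta]
    have hb : 1 ≤ b := by omega
    rw [hfloor, hdelta]
    nlinarith [sq_nonneg (m - 2), sq_nonneg a, mul_self_nonneg (b - 1)]
  · -- Here `d = 2 * a + 1` and `e = 2 * b + 1`.
    obtain ⟨a, rfl⟩ : ∃ a, Z3 = m + 1 + a := ⟨Z3 - m - 1, by ring⟩
    obtain ⟨b, rfl⟩ : ∃ b, Z1 = m - b := ⟨m - Z1, by ring⟩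
    have hfloor : (2 * (m + 1 + a) - (2 * m + 1) + 2) ^ 2 / 4 = a ^ 2 + 3 * a + 2 := by
      rw [show (2 * (m + 1 + a) - (2 * m + 1) + 2) ^ 2 = 4 * (a ^ 2 + 3 * a + 2) + 1 by ring]
      omega
    have hdelta : delta (2 * m + 1) = 1 := by simp [delta]
    have ha : 0 ≤ a := by omega
    have hb : 0 ≤ b := by omega
    have hm : 2 ≤ m := by omega
    rw [hfloor, hdelta]
    nlinarith [sq_nonneg (m - 2), sq_nonneg a, sq_nonneg b]
end
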